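/- There is an absolute constant C > 0 such that for every real x ≥ 2: (i) max_{|t| ≤ 1/2} ∑_{p ≤ x} (1 − cos(t·log p))/p ≤ log log x + C; and (ii) for every nonzero integer k, with y_k := exp((log(2|k|))²), max_{|t−k| ≤ 1/2} ∑_{y_k < p ≤ x} (1 − cos(t·log p))/p ≤ log log x + C. All sums are over primes p. -/

import Mathlib

open Finset

open scoped Classical

noncomputable def primesUpTo (y : ℝ) : Finset ℕ := (Finset.Iic ⌊y⌋₊).filter Nat.Prime

/-- Primes `p` with `a < p ≤ y`. -/
noncomputable def primesIn (a y : ℝ) : Finset ℕ :=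
  (Finset.Iic ⌊y⌋₊).filter fun p : ℕ => p.Prime ∧ a < (p : ℝ)

/-!
By the Euler product, `∑ p ≤ x, cos (t log p) / p` is `log ‖ζ(1 + 1 / log x + it)‖` up to a bounded
error; for `t = 0` this is `log log x`. So the sum over `p ≤ x` of `(1 - cos (t log p)) / p` is
`log log x - log ‖ζ(1 + 1 / log x + it)‖ + O(1)`, and only the possibility that `ζ` is small has to
be excluded. For bounded `t` this is compactness together with the non-vanishing of `ζ` on
`Re s = 1`. For `|t| ≥ 1 / 2` the sum over `y < p ≤ x` involves only the variation of `log ‖ζ‖`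
between `1 + 1 / log x + it` and `1 + 1 / log y + it`, so an upper bound
`Re ζ'/ζ(σ + it) ≪ log (|t| + 4)` for `1 < σ` suffices, with `log y = log² (2|k|)` absorbing the
factor `log (|t| + 4)`.

Such a bound follows from the expansion of `ζ'/ζ` over the zeros near `1 + it`, a sum of terms with
positive real part. The `3-4-1` inequality bounds the sum at `σ₀ + it` by `(4 / 5) / (σ₀ - 1)` when
`σ₀ - 1` is a small multiple of `1 / log (|t| + 4)`. A zero very close to `1 + it` would contribute
more than this on its own, so the sum grows by at most a constant factor as `σ` decreases to `1`.
-/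

/-! ### Landau's lemma -/

section Complex

variable {f g : ℂ → ℂ} {c z : ℂ} {R B : ℝ}

lemma differentiable_iterate_dslope (hf : Differentiable ℂ f) (ρ : ℂ) (n : ℕ) :
    Differentiable ℂ ((Function.swap dslope ρ)^[n] f) := by
  induction n with
  | zero => exact hf
  | succ n ih =>
    rw [Function.iterate_succ_apply', Function.swap, ← differentiableOn_univ,
      Complex.differentiableOn_dslope Filter.univ_mem, differentiableOn_univ]
    exact ih

lemma exists_eq_sub_pow_mul (hf : Differentiable ℂ f) (hc : f c ≠ 0) (ρ : ℂ) :
    ∃ (n : ℕ) (g : ℂ → ℂ), Differentiable ℂ g ∧ g ρ ≠ 0 ∧ ∀ z, f z = (z - ρ) ^ n * g z := by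
  obtain ⟨p, hp⟩ := hf.analyticAt ρ
  have hp0 : p ≠ 0 := fun h => hc <|
    (AnalyticOnNhd.eqOn_zero_of_preconnected_of_eventuallyEq_zero (fun z _ => hf.analyticAt z)
      isPreconnected_univ (Set.mem_univ ρ) (hp.locally_zero_iff.2 h)) (Set.mem_univ c)
  exact ⟨p.order, _, differentiable_iterate_dslope hf ρ p.order,
    hp.iterate_dslope_fslope_ne_zero hp0, hp.eq_pow_order_mul_iterate_dslope⟩

lemma exists_eq_multiset_prod_mul (hf : Differentiable ℂ f) (hc : f c ≠ 0) (Z : Finset ℂ) :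
    ∃ (S : Multiset ℂ) (g : ℂ → ℂ), Differentiable ℂ g ∧ (∀ ρ ∈ S, ρ ∈ Z) ∧ (∀ ρ ∈ Z, g ρ ≠ 0) ∧
      ∀ z, f z = (S.map (z - ·)).prod * g z := by
  induction Z using Finset.induction_on with
  | empty => exact ⟨0, f, hf, by simp, by simp, by simp⟩
  | insert a Z _ ih =>
    obtain ⟨S, g, hg, hSZ, hgZ, hfg⟩ := ih
    obtain ⟨n, g', hg', hg'a, hgg'⟩ :=
      exists_eq_sub_pow_mul hg (right_ne_zero_of_mul (hfg c ▸ hc)) a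
    refine ⟨S + Multiset.replicate n a, g', hg', fun ρ hρ => ?_, fun ρ hρ => ?_, fun z => ?_⟩
    · rcases Multiset.mem_add.1 hρ with h | h
      · exact Finset.mem_insert_of_mem (hSZ ρ h)
      · exact Multiset.eq_of_mem_replicate h ▸ Finset.mem_insert_self a Z
    · rcases Finset.mem_insert.1 hρ with rfl | h
      · exact hg'a
      · exact right_ne_zero_of_mul (hgg' ρ ▸ hgZ ρ h)
    · rw [hfg, hgg', Multiset.map_add, Multiset.prod_add, Multiset.map_replicate,
        Multiset.prod_replicate, mul_assoc]

lemma finite_zeros_of_isCompact (hf : Differentiable ℂ f) (hc : f c ≠ 0) {K : Set ℂ}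
    (hK : IsCompact K) : {z ∈ K | f z = 0}.Finite := by
  by_contra hinf
  obtain ⟨ρ, -, hρ⟩ := Set.Infinite.exists_accPt_of_subset_isCompact hinf hK fun z hz => hz.1
  rw [accPt_iff_frequently_nhdsNE] at hρ
  exact hc <| AnalyticOnNhd.eqOn_zero_of_preconnected_of_frequently_eq_zero
    (fun z _ => hf.analyticAt z) isPreconnected_univ (Set.mem_univ ρ)
    (hρ.mono fun z hz => hz.2) (Set.mem_univ c)

lemma exists_zeros_prod_mul (hf : Differentiable ℂ f) (hc : f c ≠ 0) {K : Set ℂ}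
    (hK : IsCompact K) :
    ∃ (S : Multiset ℂ) (g : ℂ → ℂ), Differentiable ℂ g ∧ (∀ ρ ∈ S, ρ ∈ K ∧ f ρ = 0) ∧
      (∀ z ∈ K, g z ≠ 0) ∧ ∀ z, f z = (S.map (z - ·)).prod * g z := by
  have hfin := finite_zeros_of_isCompact hf hc hK
  obtain ⟨S, g, hg, hS, hgZ, hfg⟩ := exists_eq_multiset_prod_mul hf hc hfin.toFinset
  refine ⟨S, g, hg, fun ρ hρ => hfin.mem_toFinset.1 (hS ρ hρ), fun z hz hgz => ?_, hfg⟩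
  have hfz : f z = 0 := by rw [hfg, hgz, mul_zero]
  exact hgZ z (hfin.mem_toFinset.2 ⟨hz, hfz⟩) hgz

lemma differentiable_multiset_prod_sub (S : Multiset ℂ) :
    Differentiable ℂ fun z => (S.map (z - ·)).prod := by
  induction S using Multiset.induction_on with
  | empty => simp
  | cons a S ih =>
    simp only [Multiset.map_cons, Multiset.prod_cons]
    fun_prop

lemma logDeriv_multiset_prod_sub (S : Multiset ℂ) (hz : (S.map (z - ·)).prod ≠ 0) :
    logDeriv (fun w => (S.map (w - ·)).prod) z = (S.map fun ρ => (z - ρ)⁻¹).sum := by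
  induction S using Multiset.induction_on with
  | empty => simp
  | cons a S ih =>
    simp only [Multiset.map_cons, Multiset.prod_cons, Multiset.sum_cons] at hz ⊢
    rw [logDeriv_mul z (left_ne_zero_of_mul hz) (right_ne_zero_of_mul hz) (by fun_prop)
      (differentiable_multiset_prod_sub S z), ih (right_ne_zero_of_mul hz)]
    simp [logDeriv_apply]

lemma norm_multiset_prod_sub_le {S : Multiset ℂ} {w : ℂ}
    (h : ∀ ρ ∈ S, ‖z - ρ‖ ≤ ‖w - ρ‖) : ‖(S.map (z - ·)).prod‖ ≤ ‖(S.map (w - ·)).prod‖ := by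
  induction S using Multiset.induction_on with
  | empty => simp
  | cons a S ih =>
    simp only [Multiset.map_cons, Multiset.prod_cons, norm_mul]
    exact mul_le_mul (h a (Multiset.mem_cons_self a S))
      (ih fun ρ hρ => h ρ (Multiset.mem_cons_of_mem hρ)) (norm_nonneg _) (norm_nonneg _)

lemma exists_log_of_ne_zero (hR : 0 < R) (hg : Differentiable ℂ g)
    (hg0 : ∀ z ∈ Metric.ball c R, g z ≠ 0) :
    ∃ L : ℂ → ℂ, L c = 0 ∧ ∀ z ∈ Metric.ball c R,
      HasDerivAt L (logDeriv g z) z ∧ Complex.exp (L z) = g z / g c := by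
  have hlogDeriv : DifferentiableOn ℂ (logDeriv g) (Metric.ball c R) := fun z hz =>
    ((by fun_prop : Differentiable ℂ (deriv g)) z |>.div (hg z) (hg0 z hz)).differentiableWithinAt
  obtain ⟨L, hLc, hL⟩ := hlogDeriv.isExactOn_ball.with_val_at c 0
  have hexp : ∀ z ∈ Metric.ball c R,
      HasDerivAt (fun w => Complex.exp (L w)) (Complex.exp (L z) * logDeriv g z) z :=
    fun z hz => (hL z hz).cexp
  obtain ⟨a, -, ha⟩ := (logDeriv_eqOn_iff
    (fun z hz => (hexp z hz).differentiableAt.differentiableWithinAt) hg.differentiableOn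
    Metric.isOpen_ball (convex_ball c R).isPreconnected (fun z hz => hg0 z hz)
    (fun z _ => Complex.exp_ne_zero (L z))).1 fun z hz => by
      rw [logDeriv_apply, (hexp z hz).deriv, mul_div_cancel_left₀ _ (Complex.exp_ne_zero _)]
  have hcR := Metric.mem_ball_self (x := c) hR
  have hac : 1 = a * g c := by simpa [hLc] using ha hcR
  refine ⟨L, hLc, fun z hz => ⟨hL z hz, ?_⟩⟩
  rw [eq_div_iff (hg0 c hcR), show Complex.exp (L z) = a * g z from ha hz, mul_right_comm, ← hac,
    one_mul]

lemma borelCaratheodory_ball {L : ℂ → ℂ} (hR : 0 < R) (hB : 0 < B)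
    (hL : DifferentiableOn ℂ L (Metric.ball c R)) (hLc : L c = 0)
    (hre : ∀ z ∈ Metric.ball c R, (L z).re ≤ B) (hz : z ∈ Metric.ball c R) :
    ‖L z‖ ≤ 2 * B * ‖z - c‖ / (R - ‖z - c‖) := by
  have hmaps : Set.MapsTo (fun w => c + w) (Metric.ball 0 R) (Metric.ball c R) := fun w hw => by
    simpa [dist_eq_norm] using hw
  have h := Complex.borelCaratheodory_zero (f := fun w => L (c + w)) (z := z - c) hB
    (hL.comp (by fun_prop) hmaps) (fun w hw => hre _ (hmaps hw)) hR
    (by simpa [dist_eq_norm] using hz) (by simpa using hLc)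
  simpa using h

lemma norm_logDeriv_le_of_ne_zero (hR : 0 < R) (hB : 0 < B) (hg : Differentiable ℂ g)
    (hg0 : ∀ z ∈ Metric.ball c R, g z ≠ 0)
    (hgB : ∀ z ∈ Metric.ball c R, ‖g z‖ ≤ Real.exp B * ‖g c‖)
    (hz : z ∈ Metric.closedBall c (R / 2)) : ‖logDeriv g z‖ ≤ 24 * B / R := by
  obtain ⟨L, hLc, hL⟩ := exists_log_of_ne_zero hR hg hg0
  have hLd : DifferentiableOn ℂ L (Metric.ball c R) := fun w hw =>
    (hL w hw).1.differentiableAt.differentiableWithinAt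
  have hgc : 0 < ‖g c‖ := norm_pos_iff.2 (hg0 c (Metric.mem_ball_self hR))
  have hre : ∀ w ∈ Metric.ball c R, (L w).re ≤ B := fun w hw => by
    rw [← Real.exp_le_exp, ← Complex.norm_exp, (hL w hw).2, norm_div, div_le_iff₀ hgc]
    exact hgB w hw
  have hLB : ∀ w ∈ Metric.closedBall c (3 * R / 4), ‖L w‖ ≤ 6 * B := fun w hw => by
    have hwR : w ∈ Metric.ball c R := Metric.closedBall_subset_ball (by linarith) hw
    rw [Metric.mem_closedBall, dist_eq_norm] at hw
    refine (borelCaratheodory_ball hR hB hLd hLc hre hwR).trans ?_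
    rw [div_le_iff₀ (by linarith)]
    nlinarith
  have hsub : Metric.closedBall z (R / 4) ⊆ Metric.closedBall c (3 * R / 4) :=
    Metric.closedBall_subset_closedBall' (by rw [Metric.mem_closedBall] at hz; linarith)
  have hcauchy : ‖deriv L z‖ ≤ 6 * B / (R / 4) := by
    refine Complex.norm_deriv_le_of_forall_mem_sphere_norm_le (by linarith)
      (hLd.mono ?_).diffContOnCl fun w hw => hLB w (hsub (Metric.sphere_subset_closedBall hw))
    exact Metric.closure_ball_subset_closedBall.trans
      (hsub.trans (Metric.closedBall_subset_ball (by linarith)))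
  rw [(hL z (Metric.closedBall_subset_ball (by linarith) hz)).1.deriv] at hcauchy
  convert hcauchy using 1
  field_simp
  norm_num

/-- Dividing out the zeros near `c` does not spoil the growth bound: a point of the sphere of
radius `R` is farther than `c` from every zero in the disc of radius `R / 2`. -/
lemma norm_le_of_eq_multiset_prod_mul (hR : 0 < R) (hg : Differentiable ℂ g) {S : Multiset ℂ}
    (hS : ∀ ρ ∈ S, ρ ∈ Metric.closedBall c (R / 2)) (hfg : ∀ z, f z = (S.map (z - ·)).prod * g z)
    (hc : f c ≠ 0) (hfB : ∀ z ∈ Metric.sphere c R, ‖f z‖ ≤ Real.exp B * ‖f c‖)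
    (hz : z ∈ Metric.closedBall c R) : ‖g z‖ ≤ Real.exp B * ‖g c‖ := by
  refine Complex.norm_le_of_forall_mem_frontier_norm_le (U := Metric.ball c R)
    Metric.isBounded_ball hg.diffContOnCl (fun w hw => ?_) (by rwa [closure_ball c hR.ne'])
  rw [frontier_ball c hR.ne'] at hw
  have hle : ‖(S.map (c - ·)).prod‖ ≤ ‖(S.map (w - ·)).prod‖ := by
    refine norm_multiset_prod_sub_le fun ρ hρ => ?_
    have h1 := hS ρ hρ
    have h2 := dist_triangle_right w c ρ
    rw [Metric.mem_closedBall] at h1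
    rw [Metric.mem_sphere] at hw
    rw [← dist_eq_norm, ← dist_eq_norm]
    rw [dist_comm ρ c] at h1
    linarith
  have hpos : 0 < ‖(S.map (c - ·)).prod‖ := norm_pos_iff.2 (left_ne_zero_of_mul (hfg c ▸ hc))
  refine le_of_mul_le_mul_left ?_ hpos
  calc ‖(S.map (c - ·)).prod‖ * ‖g w‖ ≤ ‖(S.map (w - ·)).prod‖ * ‖g w‖ := by gcongr
    _ = ‖f w‖ := by rw [hfg, norm_mul]
    _ ≤ Real.exp B * ‖f c‖ := hfB w hw
    _ = ‖(S.map (c - ·)).prod‖ * (Real.exp B * ‖g c‖) := by rw [hfg, norm_mul]; ring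

theorem exists_norm_logDeriv_sub_sum_zeros_le (hf : Differentiable ℂ f) (hR : 0 < R) (hB : 0 < B)
    (hc : f c ≠ 0) (hfB : ∀ z ∈ Metric.sphere c R, ‖f z‖ ≤ Real.exp B * ‖f c‖) :
    ∃ S : Multiset ℂ, (∀ ρ ∈ S, f ρ = 0) ∧ ∀ z ∈ Metric.closedBall c (R / 4), f z ≠ 0 →
      ‖logDeriv f z - (S.map fun ρ => (z - ρ)⁻¹).sum‖ ≤ 48 * B / R := by
  obtain ⟨S, g, hg, hS, hg0, hfg⟩ :=
    exists_zeros_prod_mul hf hc (isCompact_closedBall c (R / 2))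
  refine ⟨S, fun ρ hρ => (hS ρ hρ).2, fun z hz hfz => ?_⟩
  have hgz : ‖logDeriv g z‖ ≤ 24 * B / (R / 2) := by
    refine norm_logDeriv_le_of_ne_zero (by linarith) hB hg
      (fun w hw => hg0 w (Metric.ball_subset_closedBall hw)) (fun w hw => ?_)
      (Metric.closedBall_subset_closedBall (by linarith) hz)
    exact norm_le_of_eq_multiset_prod_mul hR hg (fun ρ hρ => (hS ρ hρ).1) hfg hc hfB
      (Metric.closedBall_subset_closedBall (by linarith) (Metric.ball_subset_closedBall hw))
  have hlog : logDeriv f z = (S.map fun ρ => (z - ρ)⁻¹).sum + logDeriv g z := by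
    rw [hfg] at hfz
    rw [funext hfg, logDeriv_mul z (left_ne_zero_of_mul hfz) (right_ne_zero_of_mul hfz)
      (differentiable_multiset_prod_sub S z) (hg z),
      logDeriv_multiset_prod_sub S (left_ne_zero_of_mul hfz)]
  rw [hlog, add_sub_cancel_left]
  convert hgz using 1
  field_simp
  norm_num

end Complex

/-! ### Growth of `(s - 1) ζ(s)` -/

section Growth

variable {s : ℂ}

/-- The fractional part cut off to `t > 1`. Its Mellin transform at `-s` is the remainder in the
representation of `ζ(s)` obtained by partial summation. -/
noncomputable def fractCutoff : ℝ → ℂ := (Set.Ioi 1).indicator fun t => ((Int.fract t : ℝ) : ℂ)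

lemma fractCutoff_of_one_lt {t : ℝ} (ht : 1 < t) : fractCutoff t = ((Int.fract t : ℝ) : ℂ) :=
  Set.indicator_of_mem (Set.mem_Ioi.2 ht) _

lemma fractCutoff_of_le_one {t : ℝ} (ht : t ≤ 1) : fractCutoff t = 0 :=
  Set.indicator_of_notMem (Set.notMem_Ioi.2 ht) _

lemma norm_fractCutoff_le_one (t : ℝ) : ‖fractCutoff t‖ ≤ 1 :=
  (norm_indicator_le_norm_self _ _).trans <| by
    rw [Complex.norm_real, Real.norm_of_nonneg (Int.fract_nonneg t)]
    exact (Int.fract_lt_one t).le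

lemma locallyIntegrableOn_fractCutoff :
    MeasureTheory.LocallyIntegrableOn fractCutoff (Set.Ioi 0) := by
  refine MeasureTheory.LocallyIntegrable.locallyIntegrableOn ?_ _
  refine (MeasureTheory.locallyIntegrable_const (1 : ℂ)).mono ?_ (.of_forall fun t => ?_)
  · have hmeas : Measurable fractCutoff :=
      (Complex.measurable_ofReal.comp measurable_fract).indicator measurableSet_Ioi
    exact hmeas.aestronglyMeasurable
  · simpa using norm_fractCutoff_le_one t

lemma fractCutoff_isBigO_atTop : fractCutoff =O[Filter.atTop] fun t : ℝ => t ^ (-0 : ℝ) :=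
  Asymptotics.IsBigO.of_bound 1 <| .of_forall fun t => by simpa using norm_fractCutoff_le_one t

lemma fractCutoff_isBigO_zero (b : ℝ) : fractCutoff =O[nhdsWithin 0 (Set.Ioi 0)] (· ^ (-b)) := by
  refine Asymptotics.IsBigO.of_bound 1 ?_
  filter_upwards [nhdsWithin_le_nhds (Iio_mem_nhds zero_lt_one)] with t ht
  rw [fractCutoff_of_le_one (Set.mem_Iio.1 ht).le, norm_zero]
  positivity

lemma mellinConvergent_fractCutoff (hs : 0 < s.re) : MellinConvergent fractCutoff (-s) :=
  mellinConvergent_of_isBigO_rpow (b := -s.re - 1) locallyIntegrableOn_fractCutoff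
    fractCutoff_isBigO_atTop (by simpa using hs) (fractCutoff_isBigO_zero _) (by simp)

lemma differentiableAt_mellin_fractCutoff (hs : 0 < s.re) :
    DifferentiableAt ℂ (mellin fractCutoff) (-s) :=
  mellin_differentiableAt_of_isBigO_rpow (b := -s.re - 1) locallyIntegrableOn_fractCutoff
    fractCutoff_isBigO_atTop (by simpa using hs) (fractCutoff_isBigO_zero _) (by simp)

lemma norm_mellin_fractCutoff_le (hs : 0 < s.re) : ‖mellin fractCutoff (-s)‖ ≤ 1 / s.re := by
  have hint : ∫ t in Set.Ioi (1 : ℝ), t ^ (-s.re - 1) = 1 / s.re := by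
    rw [integral_Ioi_rpow_of_lt (by linarith) one_pos, Real.one_rpow, sub_add_cancel,
      neg_div_neg_eq]
  rw [← hint, mellin, ← MeasureTheory.integral_indicator measurableSet_Ioi,
    ← MeasureTheory.integral_indicator measurableSet_Ioi]
  refine MeasureTheory.norm_integral_le_of_norm_le
    ((integrableOn_Ioi_rpow_of_lt (by linarith) one_pos).integrable_indicator measurableSet_Ioi)
    (.of_forall fun t => ?_)
  by_cases ht : 1 < t
  · have ht0 : 0 < t := one_pos.trans ht
    rw [Set.indicator_of_mem (Set.mem_Ioi.2 ht0), Set.indicator_of_mem (Set.mem_Ioi.2 ht),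
      norm_smul, Complex.norm_cpow_eq_rpow_re_of_pos ht0]
    refine (mul_le_of_le_one_right (by positivity) (norm_fractCutoff_le_one t)).trans_eq ?_
    simp
  · rw [Set.indicator_of_notMem (Set.notMem_Ioi.2 (not_lt.1 ht))]
    simp [Set.indicator_apply, fractCutoff_of_le_one (not_lt.1 ht)]

lemma mellin_fractCutoff_eq_integral (s : ℂ) :
    mellin fractCutoff (-s) =
      ∫ t in Set.Ioi (1 : ℝ), ((Int.fract t : ℝ) : ℂ) * (t : ℂ) ^ (-(s + 1)) := by
  have hsub : Set.Ioi (1 : ℝ) ⊆ Set.Ioi 0 := Set.Ioi_subset_Ioi zero_le_one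
  rw [mellin, ← MeasureTheory.integral_indicator measurableSet_Ioi,
    ← MeasureTheory.integral_indicator measurableSet_Ioi]
  congr with t
  by_cases ht : t ∈ Set.Ioi (1 : ℝ)
  · rw [Set.indicator_of_mem (hsub ht), Set.indicator_of_mem ht, fractCutoff_of_one_lt ht,
      smul_eq_mul, mul_comm, neg_add']
  · rw [Set.indicator_of_notMem ht]
    simp [Set.indicator_apply, fractCutoff_of_le_one (not_lt.1 ht)]

lemma riemannZeta_eq_mul_sub_mellin_fractCutoff (hs : 1 < s.re) :
    riemannZeta s = s * (1 / (s - 1) - mellin fractCutoff (-s)) := by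
  have hs0 : 0 < s.re := by linarith
  have hfloor : riemannZeta s =
      s * ∫ t in Set.Ioi (1 : ℝ), (∑ _k ∈ Finset.Icc 1 ⌊t⌋₊, (1 : ℂ)) * (t : ℂ) ^ (-(s + 1)) := by
    rw [← LSeries_one_eq_riemannZeta hs]
    refine LSeries_eq_mul_integral' 1 zero_le_one hs ?_
    exact Asymptotics.IsBigO.of_bound 1 (.of_forall fun n => by simp)
  have hintegrand : ∀ t ∈ Set.Ioi (1 : ℝ),
      (∑ _k ∈ Finset.Icc 1 ⌊t⌋₊, (1 : ℂ)) * (t : ℂ) ^ (-(s + 1)) =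
        (t : ℂ) ^ (-s) - ((Int.fract t : ℝ) : ℂ) * (t : ℂ) ^ (-(s + 1)) := by
    intro t ht
    have ht0 : (t : ℂ) ≠ 0 := Complex.ofReal_ne_zero.2 (one_pos.trans ht).ne'
    have hpow : (t : ℂ) ^ (-s) = t * (t : ℂ) ^ (-(s + 1)) := by
      rw [neg_add', Complex.cpow_sub _ _ ht0, Complex.cpow_one, mul_div_cancel₀ _ ht0]
    have hcast : (⌊t⌋₊ : ℂ) = t - Int.fract t := by
      rw [← Complex.ofReal_natCast, natCast_floor_eq_intCast_floor (one_pos.trans ht).le,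
        ← Int.self_sub_fract, Complex.ofReal_sub]
    rw [hpow, Finset.sum_const, Nat.card_Icc, Nat.add_sub_cancel, nsmul_one, hcast, sub_mul]
  have hfract : MeasureTheory.IntegrableOn
      (fun t : ℝ => ((Int.fract t : ℝ) : ℂ) * (t : ℂ) ^ (-(s + 1))) (Set.Ioi 1) := by
    refine ((mellinConvergent_fractCutoff hs0).mono_set
      (Set.Ioi_subset_Ioi zero_le_one)).congr_fun (fun t ht => ?_) measurableSet_Ioi
    simp only [fractCutoff_of_one_lt ht, smul_eq_mul, mul_comm, neg_add']
  have hpow := integrableOn_Ioi_cpow_of_lt (a := -s) (by simpa using hs) one_pos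
  rw [hfloor, MeasureTheory.setIntegral_congr_fun measurableSet_Ioi hintegrand,
    MeasureTheory.integral_sub hpow hfract, mellin_fractCutoff_eq_integral,
    integral_Ioi_cpow_of_lt (by simpa using hs) one_pos, Complex.ofReal_one, Complex.one_cpow,
    neg_add_eq_sub, ← neg_sub s 1, neg_div_neg_eq]

lemma riemannZeta₁_eq_sub_one_mul (hs : s ≠ 1) : riemannZeta₁ s = (s - 1) * riemannZeta s := by
  rw [riemannZeta_eq_inv_sub_mul hs, mul_inv_cancel_left₀ (sub_ne_zero.2 hs)]

lemma riemannZeta₁_eq_sub_mellin_fractCutoff (hs : 0 < s.re) :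
    riemannZeta₁ s = s - s * (s - 1) * mellin fractCutoff (-s) := by
  have hopen : IsOpen {z : ℂ | 0 < z.re} := isOpen_lt continuous_const Complex.continuous_re
  have hright : DifferentiableOn ℂ (fun z => z - z * (z - 1) * mellin fractCutoff (-z))
      {z | 0 < z.re} := fun z hz =>
    have hmellin : DifferentiableAt ℂ (fun w => mellin fractCutoff (-w)) z :=
      (differentiableAt_mellin_fractCutoff hz).comp z differentiableAt_id.neg
    (by fun_prop : DifferentiableAt ℂ _ z).differentiableWithinAt
  have hleft : DifferentiableOn ℂ riemannZeta₁ {z | 0 < z.re} :=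
    differentiable_riemannZeta₁.differentiableOn
  refine (hleft.analyticOnNhd hopen).eqOn_of_preconnected_of_eventuallyEq
    (hright.analyticOnNhd hopen) (convex_halfSpace_re_gt 0).isPreconnected (z₀ := 2) (by simp) ?_ hs
  have hnhds : {z : ℂ | 1 < z.re} ∈ nhds 2 :=
    (isOpen_lt continuous_const Complex.continuous_re).mem_nhds (by simp)
  filter_upwards [hnhds] with z hz
  have hz1 : z ≠ 1 := by rintro rfl; simp at hz
  have hz1' := sub_ne_zero.2 hz1
  rw [riemannZeta₁_eq_sub_one_mul hz1, riemannZeta_eq_mul_sub_mellin_fractCutoff hz]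
  field_simp

lemma norm_riemannZeta₁_le (hs : 0 < s.re) :
    ‖riemannZeta₁ s‖ ≤ ‖s‖ + ‖s‖ * ‖s - 1‖ / s.re := by
  rw [riemannZeta₁_eq_sub_mellin_fractCutoff hs]
  refine (norm_sub_le _ _).trans (add_le_add_right ?_ _)
  rw [norm_mul, norm_mul, div_eq_mul_one_div]
  exact mul_le_mul_of_nonneg_left (norm_mellin_fractCutoff_le hs) (by positivity)

end Growth

/-! ### The zeta function on and to the right of the line `Re s = 1` -/

section RightOfOne

variable {s : ℂ}

lemma riemannZeta₁_ne_zero (hs : 1 ≤ s.re) : riemannZeta₁ s ≠ 0 := by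
  rcases eq_or_ne s 1 with rfl | h1
  · simp
  · rw [riemannZeta₁_eq_sub_one_mul h1]
    exact mul_ne_zero (sub_ne_zero.2 h1) (riemannZeta_ne_zero_of_one_le_re hs)

lemma logDeriv_riemannZeta_eq (hs : 1 ≤ s.re) (h1 : s ≠ 1) :
    logDeriv riemannZeta s = -(s - 1)⁻¹ + logDeriv riemannZeta₁ s := by
  have hζ₁ := riemannZeta₁_ne_zero hs
  have hs1 := sub_ne_zero.2 h1
  rw [logDeriv_apply, logDeriv_apply, deriv_riemannZeta_eq_neg_inv_sub_sq_mul_add h1,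
    riemannZeta_eq_inv_sub_mul h1]
  field_simp

lemma log_norm_riemannZeta_eq (hs : 1 ≤ s.re) (h1 : s ≠ 1) :
    Real.log ‖riemannZeta s‖ = Real.log ‖riemannZeta₁ s‖ - Real.log ‖s - 1‖ := by
  have hs1 := norm_ne_zero_iff.2 (sub_ne_zero.2 h1)
  have hζ := norm_ne_zero_iff.2 (riemannZeta_ne_zero_of_one_le_re hs)
  rw [riemannZeta₁_eq_sub_one_mul h1, norm_mul, Real.log_mul hs1 hζ, add_sub_cancel_left]

lemma exists_norm_logDeriv_riemannZeta₁_le {K : Set ℂ} (hK : IsCompact K)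
    (hK1 : ∀ s ∈ K, 1 ≤ s.re) : ∃ C, ∀ s ∈ K, ‖logDeriv riemannZeta₁ s‖ ≤ C := by
  have hd : Continuous (deriv riemannZeta₁) := differentiable_riemannZeta₁.deriv.continuous
  exact hK.exists_bound_of_continuousOn <| hd.continuousOn.div
    differentiable_riemannZeta₁.continuous.continuousOn fun s hs => riemannZeta₁_ne_zero (hK1 s hs)

lemma exists_abs_log_norm_riemannZeta₁_le {K : Set ℂ} (hK : IsCompact K)
    (hK1 : ∀ s ∈ K, 1 ≤ s.re) : ∃ C, ∀ s ∈ K, |Real.log ‖riemannZeta₁ s‖| ≤ C :=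
  hK.exists_bound_of_continuousOn <|
    differentiable_riemannZeta₁.continuous.norm.continuousOn.log fun s hs =>
      norm_ne_zero_iff.2 (riemannZeta₁_ne_zero (hK1 s hs))

lemma exists_neg_re_logDeriv_riemannZeta_ofReal_le (M : ℝ) : ∃ C, 0 ≤ C ∧
    ∀ σ : ℝ, 1 < σ → σ ≤ M → -(logDeriv riemannZeta σ).re ≤ 1 / (σ - 1) + C := by
  obtain ⟨C, hC⟩ := exists_norm_logDeriv_riemannZeta₁_le
    (K := Complex.ofReal '' Set.Icc 1 M) (isCompact_Icc.image Complex.continuous_ofReal)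
    (by rintro _ ⟨σ, hσ, rfl⟩; exact hσ.1)
  refine ⟨|C|, abs_nonneg C, fun σ hσ hσM => ?_⟩
  have hζ₁ := (Complex.abs_re_le_norm _).trans (hC σ ⟨σ, ⟨hσ.le, hσM⟩, rfl⟩)
  have hpole : (((σ : ℂ) - 1)⁻¹).re = 1 / (σ - 1) := by
    rw [← Complex.ofReal_one, ← Complex.ofReal_sub, ← Complex.ofReal_inv, Complex.ofReal_re,
      one_div]
  rw [logDeriv_riemannZeta_eq (by simpa using hσ.le) (by simpa using hσ.ne'), Complex.add_re,
    Complex.neg_re, hpole]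
  linarith [(abs_le.1 hζ₁).1, le_abs_self C]

lemma re_natCast_cpow_neg {n : ℕ} (hn : n ≠ 0) (s : ℂ) :
    ((n : ℂ) ^ (-s)).re = (n : ℝ) ^ (-s.re) * Real.cos (s.im * Real.log n) := by
  rw [Complex.cpow_def_of_ne_zero (Nat.cast_ne_zero.2 hn), ← Complex.natCast_log, Complex.exp_re,
    Real.rpow_def_of_pos (Nat.cast_pos.2 (Nat.pos_of_ne_zero hn)), Complex.re_ofReal_mul,
    Complex.im_ofReal_mul, Complex.neg_re, Complex.neg_im, mul_neg, mul_neg,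
    Real.cos_neg, mul_comm s.im]

open ArithmeticFunction in
lemma hasSum_vonMangoldt_mul_cos (hs : 1 < s.re) :
    HasSum (fun n : ℕ => Λ n * (n : ℝ) ^ (-s.re) * Real.cos (s.im * Real.log n))
      (-(logDeriv riemannZeta s).re) := by
  have h := (LSeriesSummable_vonMangoldt hs).LSeriesHasSum
  rw [LSeries_vonMangoldt_eq_deriv_riemannZeta_div hs, neg_div] at h
  refine (Complex.hasSum_re h).congr_fun fun n => ?_
  rcases eq_or_ne n 0 with rfl | hn
  · simp
  · rw [LSeries.term_of_ne_zero hn, div_eq_mul_inv, ← Complex.cpow_neg, Complex.re_ofReal_mul,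
      re_natCast_cpow_neg hn, mul_assoc]

open ArithmeticFunction in
lemma re_logDeriv_riemannZeta_le_neg_re_ofReal (hs : 1 < s.re) :
    (logDeriv riemannZeta s).re ≤ -(logDeriv riemannZeta s.re).re := by
  have h := (hasSum_vonMangoldt_mul_cos (s := s.re) (by simpa using hs)).add
    (hasSum_vonMangoldt_mul_cos hs)
  have hnonneg := h.nonneg fun n => ?_
  · linarith
  have hΛ : 0 ≤ Λ n * (n : ℝ) ^ (-s.re) := mul_nonneg vonMangoldt_nonneg (by positivity)
  simp only [Complex.ofReal_re, Complex.ofReal_im, zero_mul, Real.cos_zero, ← mul_add]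
  exact mul_nonneg hΛ (by linarith [Real.neg_one_le_cos (s.im * Real.log n)])

open ArithmeticFunction in
lemma three_four_one {σ : ℝ} (hσ : 1 < σ) (t : ℝ) :
    3 * (logDeriv riemannZeta σ).re + 4 * (logDeriv riemannZeta ⟨σ, t⟩).re +
      (logDeriv riemannZeta ⟨σ, 2 * t⟩).re ≤ 0 := by
  have h := (((hasSum_vonMangoldt_mul_cos (s := σ) (by simpa using hσ)).mul_left 3).add
    ((hasSum_vonMangoldt_mul_cos (s := ⟨σ, t⟩) hσ).mul_left 4)).add
    (hasSum_vonMangoldt_mul_cos (s := ⟨σ, 2 * t⟩) hσ)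
  have hnonneg := h.nonneg fun n => ?_
  · linarith
  set θ := t * Real.log n with hθ
  calc 0 ≤ Λ n * (n : ℝ) ^ (-σ) * (2 * (Real.cos θ + 1) ^ 2) :=
        mul_nonneg (mul_nonneg vonMangoldt_nonneg (by positivity)) (by positivity)
    _ = _ := by
      simp only [Complex.ofReal_re, Complex.ofReal_im, zero_mul, Real.cos_zero, mul_assoc 2 t, ← hθ,
        Real.cos_two_mul]
      ring

/-! ### The logarithm of the zeta function as a sum over primes -/

lemma norm_neg_log_one_sub_sub_self_le {z : ℂ} (hz : ‖z‖ ≤ 1 / 2) :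
    ‖-Complex.log (1 - z) - z‖ ≤ ‖z‖ ^ 2 := by
  have h := Complex.norm_log_one_add_sub_self_le (z := -z) (by rw [norm_neg]; linarith)
  rw [norm_neg, ← norm_neg] at h
  have hinv : (1 - ‖z‖)⁻¹ ≤ 2 := by
    rw [inv_le_comm₀ (by linarith) two_pos]
    linarith
  calc ‖-Complex.log (1 - z) - z‖ = ‖-(Complex.log (1 + -z) - -z)‖ := by ring_nf
    _ ≤ ‖z‖ ^ 2 * (1 - ‖z‖)⁻¹ / 2 := h
    _ ≤ ‖z‖ ^ 2 := by nlinarith [sq_nonneg ‖z‖]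

lemma norm_prime_cpow_neg (p : Nat.Primes) (s : ℂ) : ‖(p : ℂ) ^ (-s)‖ = (p : ℝ) ^ (-s.re) := by
  rw [Complex.norm_natCast_cpow_of_pos p.2.pos, Complex.neg_re]

lemma norm_eulerFactor_log_sub_le (hs : 1 < s.re) (p : Nat.Primes) :
    ‖-Complex.log (1 - (p : ℂ) ^ (-s)) - (p : ℂ) ^ (-s)‖ ≤ (p : ℝ) ^ (-2 : ℝ) := by
  have hp : (2 : ℝ) ≤ p := by exact_mod_cast p.2.two_le
  have hle : ‖(p : ℂ) ^ (-s)‖ ≤ (p : ℝ)⁻¹ := by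
    rw [norm_prime_cpow_neg, ← Real.rpow_neg_one]
    exact Real.rpow_le_rpow_of_exponent_le (by linarith) (by linarith)
  have hhalf : ‖(p : ℂ) ^ (-s)‖ ≤ 1 / 2 := by
    rw [one_div]
    exact hle.trans (inv_anti₀ two_pos hp)
  calc _ ≤ ‖(p : ℂ) ^ (-s)‖ ^ 2 := norm_neg_log_one_sub_sub_self_le hhalf
    _ ≤ (p : ℝ)⁻¹ ^ 2 := by gcongr
    _ = (p : ℝ) ^ (-2 : ℝ) := by rw [Real.rpow_neg (by linarith), Real.rpow_two, inv_pow]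

lemma summable_primes_rpow_neg {σ : ℝ} (hσ : 1 < σ) :
    Summable fun p : Nat.Primes => (p : ℝ) ^ (-σ) :=
  Nat.Primes.summable_rpow.2 (by linarith)

theorem abs_log_norm_riemannZeta_sub_tsum_primes_le (hs : 1 < s.re) :
    |Real.log ‖riemannZeta s‖ -
      ∑' p : Nat.Primes, (p : ℝ) ^ (-s.re) * Real.cos (s.im * Real.log p)| ≤
      ∑' p : Nat.Primes, (p : ℝ) ^ (-2 : ℝ) := by
  have hsq := summable_primes_rpow_neg one_lt_two
  have hz : Summable fun p : Nat.Primes => (p : ℂ) ^ (-s) := by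
    refine Summable.of_norm ?_
    simpa only [norm_prime_cpow_neg] using summable_primes_rpow_neg hs
  have hlog : Real.log ‖riemannZeta s‖ =
      (∑' p : Nat.Primes, -Complex.log (1 - (p : ℂ) ^ (-s))).re := by
    rw [← riemannZeta_eulerProduct_exp_log hs, Complex.norm_exp, Real.log_exp]
  have hre : ∑' p : Nat.Primes, (p : ℝ) ^ (-s.re) * Real.cos (s.im * Real.log p) =
      (∑' p : Nat.Primes, (p : ℂ) ^ (-s)).re := by
    rw [Complex.re_tsum hz]
    exact tsum_congr fun p => (re_natCast_cpow_neg p.2.ne_zero s).symm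
  have herr := hsq.of_norm_bounded (norm_eulerFactor_log_sub_le hs)
  have hmain : Summable fun p : Nat.Primes => -Complex.log (1 - (p : ℂ) ^ (-s)) := by
    simpa using herr.add hz
  rw [hlog, hre, ← Complex.sub_re, ← hmain.tsum_sub hz]
  exact (Complex.abs_re_le_norm _).trans
    (tsum_of_norm_bounded hsq.hasSum (norm_eulerFactor_log_sub_le hs))

lemma exists_le_norm_riemannZeta {σ : ℝ} (hσ : 1 < σ) :
    ∃ c, 0 < c ∧ ∀ s : ℂ, σ ≤ s.re → c ≤ ‖riemannZeta s‖ := by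
  refine ⟨Real.exp (-(∑' p : Nat.Primes, (p : ℝ) ^ (-2 : ℝ) + ∑' p : Nat.Primes, (p : ℝ) ^ (-σ))),
    Real.exp_pos _, fun s hs => ?_⟩
  have hs1 := hσ.trans_le hs
  have hζ := norm_pos_iff.2 (riemannZeta_ne_zero_of_one_le_re hs1.le)
  have hprimes : ‖∑' p : Nat.Primes, (p : ℝ) ^ (-s.re) * Real.cos (s.im * Real.log p)‖ ≤
      ∑' p : Nat.Primes, (p : ℝ) ^ (-σ) := by
    refine tsum_of_norm_bounded (summable_primes_rpow_neg hσ).hasSum fun p => ?_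
    have hp : (1 : ℝ) ≤ p := by exact_mod_cast p.2.one_le
    rw [norm_mul, Real.norm_of_nonneg (by positivity)]
    exact (mul_le_of_le_one_right (by positivity) (Real.abs_cos_le_one _)).trans
      (Real.rpow_le_rpow_of_exponent_le hp (by linarith))
  rw [← Real.le_log_iff_exp_le hζ]
  linarith [(abs_le.1 (abs_log_norm_riemannZeta_sub_tsum_primes_le hs1)).1, (abs_le.1 hprimes).1]

end RightOfOne

/-! ### The logarithmic derivative near the line `Re s = 1` -/

section NearLine

variable {s ρ : ℂ} {S : Multiset ℂ} {σ σ₀ t : ℝ}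

lemma one_le_log_abs_add_four (t : ℝ) : 1 ≤ Real.log (|t| + 4) := by
  rw [Real.le_log_iff_exp_le (by positivity)]
  linarith [Real.exp_one_lt_d9, abs_nonneg t]

lemma log_abs_two_mul_add_four_le (t : ℝ) :
    Real.log (|2 * t| + 4) ≤ 2 * Real.log (|t| + 4) := by
  rw [← Nat.cast_ofNat, ← Real.log_pow, abs_mul, Nat.abs_cast]
  refine Real.log_le_log (by positivity) ?_
  push_cast
  nlinarith [abs_nonneg t]

lemma norm_riemannZeta₁_le_of_mem_closedBall
    (hs : s ∈ Metric.closedBall (⟨5 / 4, t⟩ : ℂ) 1) : ‖riemannZeta₁ s‖ ≤ 5 * (|t| + 4) ^ 2 := by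
  rw [mem_closedBall_iff_norm] at hs
  have hre := (abs_le.1 ((Complex.abs_re_le_norm _).trans hs)).1
  rw [Complex.sub_re] at hre
  have hcentre : ‖(⟨5 / 4, t⟩ : ℂ) - 1‖ ≤ |t| + 1 / 4 := by
    refine (Complex.norm_le_abs_re_add_abs_im _).trans_eq ?_
    norm_num [add_comm]
  have hs1 : ‖s - 1‖ ≤ |t| + 5 / 4 := by
    linarith [norm_sub_le_norm_sub_add_norm_sub s ⟨5 / 4, t⟩ 1]
  have hs0 : ‖s‖ ≤ |t| + 9 / 4 := by
    linarith [norm_le_norm_sub_add s 1, norm_one (α := ℂ)]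
  have hquarter : 1 / 4 ≤ s.re := by linarith
  calc ‖riemannZeta₁ s‖ ≤ ‖s‖ + ‖s‖ * ‖s - 1‖ / s.re := norm_riemannZeta₁_le (by linarith)
    _ ≤ (|t| + 9 / 4) + (|t| + 9 / 4) * (|t| + 5 / 4) / (1 / 4) := by gcongr
    _ ≤ 5 * (|t| + 4) ^ 2 := by nlinarith [abs_nonneg t]

lemma exists_norm_riemannZeta₁_le_exp_mul : ∃ K, 0 < K ∧ ∀ t : ℝ,
    ∀ s ∈ Metric.closedBall (⟨5 / 4, t⟩ : ℂ) 1,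
      ‖riemannZeta₁ s‖ ≤ Real.exp (K * Real.log (|t| + 4)) * ‖riemannZeta₁ ⟨5 / 4, t⟩‖ := by
  obtain ⟨c, hc, hlow⟩ := exists_le_norm_riemannZeta (σ := 5 / 4) (by norm_num)
  refine ⟨2 + |Real.log (20 / c)|, by positivity, fun t s hs => ?_⟩
  set L := Real.log (|t| + 4)
  have hcentre : c / 4 ≤ ‖riemannZeta₁ ⟨5 / 4, t⟩‖ := by
    have hre : 1 / 4 ≤ ‖(⟨5 / 4, t⟩ : ℂ) - 1‖ :=
      le_trans (by norm_num) (Complex.re_le_norm (⟨5 / 4, t⟩ - 1))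
    rw [riemannZeta₁_eq_sub_one_mul (fun h => by norm_num [Complex.ext_iff] at h), norm_mul]
    calc c / 4 = 1 / 4 * c := by ring
      _ ≤ _ := by gcongr; exact hlow _ le_rfl
  have hconst : 20 / c ≤ Real.exp (|Real.log (20 / c)| * L) := by
    rw [← Real.log_le_iff_le_exp (by positivity)]
    exact (le_abs_self _).trans (le_mul_of_one_le_right (abs_nonneg _) (one_le_log_abs_add_four t))
  calc ‖riemannZeta₁ s‖ ≤ 5 * (|t| + 4) ^ 2 := norm_riemannZeta₁_le_of_mem_closedBall hs
    _ = Real.exp (2 * L) * (20 / c) * (c / 4) := by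
      rw [two_mul, Real.exp_add, Real.exp_log (by positivity)]
      field_simp
      norm_num
    _ ≤ Real.exp (2 * L) * Real.exp (|Real.log (20 / c)| * L) * ‖riemannZeta₁ ⟨5 / 4, t⟩‖ := by
      gcongr
    _ = _ := by rw [← Real.exp_add, ← add_mul]

lemma exists_abs_re_logDeriv_riemannZeta₁_sub_sum_le : ∃ K, 0 < K ∧ ∀ t : ℝ, ∃ S : Multiset ℂ,
    (∀ ρ ∈ S, ρ.re < 1) ∧ ∀ σ ∈ Set.Icc (1 : ℝ) (3 / 2),
      |(logDeriv riemannZeta₁ ⟨σ, t⟩).re - (S.map fun ρ => ((⟨σ, t⟩ - ρ : ℂ)⁻¹).re).sum| ≤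
        K * Real.log (|t| + 4) := by
  obtain ⟨K, hK, hgrowth⟩ := exists_norm_riemannZeta₁_le_exp_mul
  refine ⟨48 * K, by positivity, fun t => ?_⟩
  have hL := one_le_log_abs_add_four t
  obtain ⟨S, hS, hsum⟩ := exists_norm_logDeriv_sub_sum_zeros_le differentiable_riemannZeta₁
    one_pos (B := K * Real.log (|t| + 4)) (by positivity)
    (riemannZeta₁_ne_zero (s := ⟨5 / 4, t⟩) (by norm_num))
    fun z hz => hgrowth t z (Metric.sphere_subset_closedBall hz)
  refine ⟨S, fun ρ hρ => ?_, fun σ hσ => ?_⟩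
  · by_contra! hre
    exact riemannZeta₁_ne_zero hre (hS ρ hρ)
  · have hmem : (⟨σ, t⟩ : ℂ) ∈ Metric.closedBall (⟨5 / 4, t⟩ : ℂ) (1 / 4) := by
      rw [mem_closedBall_iff_norm]
      refine (Complex.norm_le_abs_re_add_abs_im _).trans ?_
      rw [Complex.sub_re, Complex.sub_im, sub_self, abs_zero, add_zero, abs_le]
      constructor <;> linarith [hσ.1, hσ.2]
    have h := (Complex.abs_re_le_norm _).trans (hsum _ hmem (riemannZeta₁_ne_zero hσ.1))
    have hre : ((S.map fun ρ => (⟨σ, t⟩ - ρ : ℂ)⁻¹).sum).re =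
        (S.map fun ρ => ((⟨σ, t⟩ - ρ : ℂ)⁻¹).re).sum := by
      rw [← Complex.coe_reAddGroupHom, map_multiset_sum, Multiset.map_map]
      rfl
    rwa [Complex.sub_re, hre, div_one, ← mul_assoc] at h

lemma re_inv_sub_nonneg (h : ρ.re ≤ s.re) : 0 ≤ ((s - ρ)⁻¹).re := by
  rw [Complex.inv_re]
  exact div_nonneg (sub_nonneg.2 h) (Complex.normSq_nonneg _)

lemma exists_neg_log_le_re_logDeriv_riemannZeta₁ : ∃ K, 0 < K ∧ ∀ t : ℝ,
    ∀ σ ∈ Set.Icc (1 : ℝ) (3 / 2),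
      -(K * Real.log (|t| + 4)) ≤ (logDeriv riemannZeta₁ ⟨σ, t⟩).re := by
  obtain ⟨K, hK, hlocal⟩ := exists_abs_re_logDeriv_riemannZeta₁_sub_sum_le
  refine ⟨K, hK, fun t σ hσ => ?_⟩
  obtain ⟨S, hS, hsum⟩ := hlocal t
  have hnonneg : 0 ≤ (S.map fun ρ => ((⟨σ, t⟩ - ρ : ℂ)⁻¹).re).sum := by
    refine Multiset.sum_nonneg fun x hx => ?_
    obtain ⟨ρ, hρ, rfl⟩ := Multiset.mem_map.1 hx
    exact re_inv_sub_nonneg ((hS ρ hρ).le.trans hσ.1)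
  linarith [(abs_le.1 (hsum σ hσ)).1]

lemma re_logDeriv_riemannZeta_eq (hσ : 1 < σ) (t : ℝ) :
    (logDeriv riemannZeta ⟨σ, t⟩).re =
      (logDeriv riemannZeta₁ ⟨σ, t⟩).re - ((⟨σ, t⟩ - 1 : ℂ)⁻¹).re := by
  have h1 : (⟨σ, t⟩ : ℂ) ≠ 1 := fun h => hσ.ne' (congrArg Complex.re h)
  rw [logDeriv_riemannZeta_eq hσ.le h1, Complex.add_re, Complex.neg_re, neg_add_eq_sub]

lemma re_inv_sub_one_le (ht : 1 / 2 ≤ |s.im|) : ((s - 1)⁻¹).re ≤ 2 := by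
  refine (Complex.re_le_norm _).trans ?_
  have him : 1 / 2 ≤ ‖s - 1‖ := by
    rw [← sub_zero s.im, ← Complex.one_im, ← Complex.sub_im] at ht
    exact ht.trans (Complex.abs_im_le_norm _)
  rw [norm_inv]
  exact (inv_anti₀ (by norm_num) him).trans_eq (by norm_num)

lemma exists_re_logDeriv_riemannZeta_le_three_div : ∃ K, 0 < K ∧ ∀ t : ℝ, 1 / 2 ≤ |t| →
    ∀ σ ∈ Set.Ioc (1 : ℝ) (3 / 2),
      (logDeriv riemannZeta ⟨σ, t⟩).re ≤ 3 / 4 / (σ - 1) + K * Real.log (|t| + 4) := by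
  obtain ⟨C, hC, hreal⟩ := exists_neg_re_logDeriv_riemannZeta_ofReal_le (3 / 2)
  obtain ⟨K, hK, hlower⟩ := exists_neg_log_le_re_logDeriv_riemannZeta₁
  refine ⟨3 * C + 2 + 2 * K, by positivity, fun t ht σ ⟨hσ, hσ'⟩ => ?_⟩
  have ht2 : 1 / 2 ≤ |2 * t| := by
    rw [abs_mul, abs_two]
    linarith
  have hL := one_le_log_abs_add_four t
  have hL2 : K * Real.log (|2 * t| + 4) ≤ K * (2 * Real.log (|t| + 4)) :=
    mul_le_mul_of_nonneg_left (log_abs_two_mul_add_four_le t) hK.le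
  have hpole := re_inv_sub_one_le (s := ⟨σ, 2 * t⟩) ht2
  have hdiv : 3 / 4 / (σ - 1) = 3 / 4 * (1 / (σ - 1)) := by ring
  nlinarith [three_four_one hσ t, hreal σ hσ hσ', hlower (2 * t) σ ⟨hσ.le, hσ'⟩,
    re_logDeriv_riemannZeta_eq hσ (2 * t)]

lemma re_inv_mk_sub (σ t : ℝ) (ρ : ℂ) :
    ((⟨σ, t⟩ - ρ : ℂ)⁻¹).re = (σ - ρ.re) / ((σ - ρ.re) ^ 2 + (t - ρ.im) ^ 2) := by
  rw [Complex.inv_re, Complex.normSq_apply, Complex.sub_re, Complex.sub_im, sq, sq]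

/-- A zero contributing at most `(4 / 5) / (σ₀ - 1)` at `σ₀ + it` has distance at least
`(σ₀ - 1) / 10` from `1 + it`. -/
lemma re_inv_sub_le_mul_re_inv_sub (hρ : ρ.re ≤ 1) (hσ : 1 < σ) (hσσ₀ : σ ≤ σ₀)
    (h : ((⟨σ₀, t⟩ - ρ : ℂ)⁻¹).re ≤ 4 / 5 / (σ₀ - 1)) :
    ((⟨σ, t⟩ - ρ : ℂ)⁻¹).re ≤ 121 * ((⟨σ₀, t⟩ - ρ : ℂ)⁻¹).re := by
  obtain ⟨u, rfl⟩ : ∃ u, σ = 1 + u := ⟨σ - 1, by ring⟩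
  obtain ⟨u₀, rfl⟩ : ∃ u₀, σ₀ = 1 + u₀ := ⟨σ₀ - 1, by ring⟩
  simp only [re_inv_mk_sub, add_sub_right_comm _ _ ρ.re, add_sub_cancel_left] at h ⊢
  set a := 1 - ρ.re
  set b := t - ρ.im
  have ha : 0 ≤ a := sub_nonneg.2 hρ
  have hu : 0 < u := by linarith
  have hu₀ : 0 < u₀ := by linarith
  have hfar : (u₀ / 10) ^ 2 ≤ a ^ 2 + b ^ 2 := by
    by_contra! hnear
    rw [div_le_div_iff₀ (by positivity) hu₀] at h
    nlinarith [sq_nonneg b, mul_nonneg ha hu₀.le]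
  have hdist : (a + u₀) ^ 2 + b ^ 2 ≤ 121 * ((a + u) ^ 2 + b ^ 2) := by
    nlinarith [sq_nonneg (10 * a - u₀), mul_nonneg hu.le ha, sq_nonneg b, sq_nonneg u]
  rw [← mul_div_assoc, div_le_div_iff₀ (by positivity) (by positivity)]
  calc (a + u) * ((a + u₀) ^ 2 + b ^ 2) ≤ (a + u₀) * (121 * ((a + u) ^ 2 + b ^ 2)) := by
        gcongr
        linarith
    _ = 121 * (a + u₀) * ((a + u) ^ 2 + b ^ 2) := by ring

lemma sum_re_inv_sub_le (hS : ∀ ρ ∈ S, ρ.re ≤ 1) (hσ : 1 < σ) (hσσ₀ : σ ≤ σ₀)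
    (h : (S.map fun ρ => ((⟨σ₀, t⟩ - ρ : ℂ)⁻¹).re).sum ≤ 4 / 5 / (σ₀ - 1)) :
    (S.map fun ρ => ((⟨σ, t⟩ - ρ : ℂ)⁻¹).re).sum ≤ 97 / (σ₀ - 1) := by
  have hnonneg : ∀ x ∈ S.map fun ρ => ((⟨σ₀, t⟩ - ρ : ℂ)⁻¹).re, 0 ≤ x := by
    intro x hx
    obtain ⟨ρ, hρ, rfl⟩ := Multiset.mem_map.1 hx
    exact re_inv_sub_nonneg ((hS ρ hρ).trans (hσ.le.trans hσσ₀))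
  have hterm : ∀ ρ ∈ S, ((⟨σ, t⟩ - ρ : ℂ)⁻¹).re ≤ 121 * ((⟨σ₀, t⟩ - ρ : ℂ)⁻¹).re := fun ρ hρ =>
    re_inv_sub_le_mul_re_inv_sub (hS ρ hρ) hσ hσσ₀ <|
      (Multiset.single_le_sum hnonneg _ (Multiset.mem_map_of_mem _ hρ)).trans h
  have hpos : 0 < σ₀ - 1 := by linarith
  calc _ ≤ (S.map fun ρ => 121 * ((⟨σ₀, t⟩ - ρ : ℂ)⁻¹).re).sum :=
        Multiset.sum_map_le_sum_map _ _ hterm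
    _ = 121 * (S.map fun ρ => ((⟨σ₀, t⟩ - ρ : ℂ)⁻¹).re).sum := Multiset.sum_map_mul_left
    _ ≤ 121 * (4 / 5 / (σ₀ - 1)) := by gcongr
    _ ≤ 97 / (σ₀ - 1) := by
      rw [← mul_div_assoc]
      gcongr
      norm_num

lemma exists_re_logDeriv_riemannZeta_le_of_le : ∃ K, 0 < K ∧ ∀ t : ℝ, 1 / 2 ≤ |t| →
    ∀ σ₀ ∈ Set.Ioc (1 : ℝ) (3 / 2), K * Real.log (|t| + 4) ≤ 1 / 20 / (σ₀ - 1) →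
      ∀ σ ∈ Set.Ioc 1 σ₀,
        (logDeriv riemannZeta ⟨σ, t⟩).re ≤ 97 / (σ₀ - 1) + K * Real.log (|t| + 4) := by
  obtain ⟨A, hA, hlocal⟩ := exists_abs_re_logDeriv_riemannZeta₁_sub_sum_le
  obtain ⟨B, hB, h341⟩ := exists_re_logDeriv_riemannZeta_le_three_div
  refine ⟨A + B + 2, by positivity, fun t ht σ₀ ⟨hσ₀, hσ₀'⟩ hL σ ⟨hσ, hσσ₀⟩ => ?_⟩
  obtain ⟨S, hS, hsum⟩ := hlocal t
  have hL1 := one_le_log_abs_add_four t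
  have hzeros : (S.map fun ρ => ((⟨σ₀, t⟩ - ρ : ℂ)⁻¹).re).sum ≤ 4 / 5 / (σ₀ - 1) := by
    have hsplit : 4 / 5 / (σ₀ - 1) = 3 / 4 / (σ₀ - 1) + 1 / 20 / (σ₀ - 1) := by ring
    have hpole := re_inv_sub_one_le (s := ⟨σ₀, t⟩) ht
    linarith [(abs_le.1 (hsum σ₀ ⟨hσ₀.le, hσ₀'⟩)).1, h341 t ht σ₀ ⟨hσ₀, hσ₀'⟩,
      re_logDeriv_riemannZeta_eq hσ₀ t]
  have hpole : 0 ≤ ((⟨σ, t⟩ - 1 : ℂ)⁻¹).re := re_inv_sub_nonneg hσ.le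
  have hBL : 0 ≤ B * Real.log (|t| + 4) := by positivity
  linarith [(abs_le.1 (hsum σ ⟨hσ.le, hσσ₀.trans hσ₀'⟩)).2, re_logDeriv_riemannZeta_eq hσ t,
    sum_re_inv_sub_le (fun ρ hρ => (hS ρ hρ).le) hσ hσσ₀ hzeros]

theorem exists_re_logDeriv_riemannZeta_le_log (M : ℝ) : ∃ C, 0 < C ∧ ∀ t : ℝ, 1 / 2 ≤ |t| →
    ∀ σ : ℝ, 1 < σ → σ ≤ M → (logDeriv riemannZeta ⟨σ, t⟩).re ≤ C * Real.log (|t| + 4) := by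
  obtain ⟨K, hK, hnear⟩ := exists_re_logDeriv_riemannZeta_le_of_le
  obtain ⟨C, hC, hreal⟩ := exists_neg_re_logDeriv_riemannZeta_ofReal_le M
  refine ⟨1940 * (K + 1) + K + C, by positivity, fun t ht σ hσ hσM => ?_⟩
  have hL := one_le_log_abs_add_four t
  set L := Real.log (|t| + 4)
  have hKL : 0 < K * L := by positivity
  obtain ⟨σ₀, hσ₀⟩ : ∃ σ₀, σ₀ - 1 = 1 / (20 * (K + 1) * L) :=
    ⟨1 + 1 / (20 * (K + 1) * L), add_sub_cancel_left _ _⟩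
  have hσ₀1 : 0 < σ₀ - 1 := by rw [hσ₀]; positivity
  have hσ₀2 : σ₀ - 1 ≤ 1 / 2 := hσ₀.trans_le (one_div_le_one_div_of_le two_pos (by nlinarith))
  have hdiv (a : ℝ) : a / (σ₀ - 1) = a * (20 * (K + 1) * L) := by
    rw [hσ₀, div_div_eq_mul_div, div_one]
  have hCL : C ≤ C * L := le_mul_of_one_le_right hC hL
  rcases le_total σ σ₀ with hle | hge
  · have h := hnear t ht σ₀ ⟨by linarith, by linarith⟩ (by rw [hdiv]; linarith) σ ⟨hσ, hle⟩
    rw [hdiv] at h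
    linarith
  · have h : 1 / (σ - 1) ≤ 1 / (σ₀ - 1) := one_div_le_one_div_of_le hσ₀1 (by linarith)
    rw [hdiv] at h
    linarith [re_logDeriv_riemannZeta_le_neg_re_ofReal (s := ⟨σ, t⟩) hσ, hreal σ hσ hσM]

end NearLine

/-! ### Truncated prime sums -/

section TruncatedSums

variable {x x₀ y w : ℝ}

lemma mem_primesUpTo (hx : 0 ≤ x) {n : ℕ} : n ∈ primesUpTo x ↔ (n : ℝ) ≤ x ∧ n.Prime := by
  rw [primesUpTo, mem_filter, mem_Iic, Nat.le_floor_iff hx]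

lemma abs_ite_sub_exp_neg_le (hw : 0 ≤ w) :
    |(if w ≤ 1 then 1 else 0) - Real.exp (-w)| ≤ w * Real.exp (1 - w) := by
  split_ifs with h1
  · have hexp : 1 ≤ Real.exp (1 - w) := Real.one_le_exp (by linarith)
    rw [abs_of_nonneg (sub_nonneg.2 (Real.exp_le_one_iff.2 (by linarith)))]
    nlinarith [Real.add_one_le_exp (-w)]
  · rw [zero_sub, abs_neg, Real.abs_exp]
    calc Real.exp (-w) ≤ Real.exp (1 - w) := Real.exp_le_exp.2 (by linarith)
      _ ≤ w * Real.exp (1 - w) := le_mul_of_one_le_left (Real.exp_pos _).le (by linarith)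

lemma abs_ite_inv_sub_rpow_le (hx : 1 < x) (hy : 1 ≤ y) :
    |(if y ≤ x then y⁻¹ else 0) - y ^ (-(1 + 1 / Real.log x))| ≤
      Real.exp 1 / Real.log x * (Real.log y * y ^ (-(1 + 1 / Real.log x))) := by
  have hx0 := Real.log_pos hx
  have hy0 : 0 < y := by linarith
  set w := Real.log y / Real.log x with hw
  have hpow : y ^ (-(1 + 1 / Real.log x)) = y⁻¹ * Real.exp (-w) := by
    rw [neg_add, Real.rpow_add hy0, Real.rpow_neg_one, Real.rpow_def_of_pos hy0, hw, mul_neg,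
      mul_one_div]
  have hite : (if y ≤ x then y⁻¹ else 0) = y⁻¹ * if w ≤ 1 then 1 else 0 := by
    simp only [hw, div_le_one hx0, Real.log_le_log_iff hy0 (by linarith : 0 < x), mul_ite, mul_one,
      mul_zero]
  rw [hite, hpow, ← mul_sub, abs_mul, abs_of_pos (inv_pos.2 hy0)]
  calc _ ≤ y⁻¹ * (w * Real.exp (1 - w)) := by
        gcongr
        exact abs_ite_sub_exp_neg_le (div_nonneg (Real.log_nonneg hy) hx0.le)
    _ = _ := by
      rw [sub_eq_add_neg, Real.exp_add, hw]
      ring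

lemma hasSum_ite_prime {f : ℕ → ℝ} (hf : Summable fun p : Nat.Primes => f p) :
    HasSum (fun n : ℕ => if n.Prime then f n else 0) (∑' p : Nat.Primes, f p) := by
  refine ((hasSum_subtype_iff_indicator (s := {p : ℕ | p.Prime})).1 hf.hasSum).congr_fun
    fun n => ?_
  simp only [Set.indicator_apply, Set.mem_ofPred_eq]

open ArithmeticFunction in
lemma abs_sum_primesUpTo_sub_tsum_le (hx : 1 < x) {c : ℕ → ℝ} (hc : ∀ n, |c n| ≤ 1) :
    |∑ p ∈ primesUpTo x, c p / p -
      ∑' p : Nat.Primes, (p : ℝ) ^ (-(1 + 1 / Real.log x)) * c p| ≤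
      Real.exp 1 / Real.log x * -(logDeriv riemannZeta (1 + 1 / Real.log x : ℝ)).re := by
  have hlog := Real.log_pos hx
  set σ := 1 + 1 / Real.log x
  have hσ : 1 < σ := lt_add_of_pos_right _ (one_div_pos.2 hlog)
  have htrunc : HasSum (fun n : ℕ => if n ∈ primesUpTo x then c n / n else 0)
      (∑ p ∈ primesUpTo x, c p / p) := by
    rw [← sum_congr rfl fun n hn => if_pos hn]
    exact hasSum_sum_of_ne_finset_zero fun n hn => if_neg hn
  have hfull : Summable fun p : Nat.Primes => (p : ℝ) ^ (-σ) * c p := by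
    refine (summable_primes_rpow_neg hσ).of_norm_bounded fun p => ?_
    rw [norm_mul, Real.norm_of_nonneg (by positivity)]
    exact mul_le_of_le_one_right (by positivity) (hc p)
  have hΛ := (hasSum_vonMangoldt_mul_cos (s := σ) hσ).mul_left (Real.exp 1 / Real.log x)
  rw [← (htrunc.sub (hasSum_ite_prime (f := fun n => (n : ℝ) ^ (-σ) * c n) hfull)).tsum_eq,
    ← Real.norm_eq_abs]
  refine tsum_of_norm_bounded hΛ fun n => ?_
  rw [Complex.ofReal_re, Complex.ofReal_im, zero_mul, Real.cos_zero, mul_one]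
  by_cases hn : n.Prime
  · have hfactor : (if (n : ℝ) ≤ x then c n / n else 0) - (n : ℝ) ^ (-σ) * c n =
        ((if (n : ℝ) ≤ x then (n : ℝ)⁻¹ else 0) - (n : ℝ) ^ (-σ)) * c n := by
      split_ifs <;> ring
    simp only [mem_primesUpTo (zero_le_one.trans hx.le), hn, and_true, if_true,
      vonMangoldt_apply_prime hn]
    rw [hfactor, norm_mul]
    exact (mul_le_of_le_one_right (norm_nonneg _) (hc n)).trans
      (abs_ite_inv_sub_rpow_le hx (by exact_mod_cast hn.one_le))
  · simp only [mem_primesUpTo (zero_le_one.trans hx.le), hn, and_false, if_false, sub_zero,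
      norm_zero]
    exact mul_nonneg (by positivity) (mul_nonneg vonMangoldt_nonneg (by positivity))

/-- The smooth weight `p ^ (-1 / log x)` replaces the cut-off `p ≤ x` at a cost governed by
`-ζ'/ζ (1 + 1 / log x) = log x + O(1)`. -/
lemma exists_abs_sum_primesUpTo_sub_log_norm_riemannZeta_le (hx₀ : 1 < x₀) :
    ∃ C, ∀ x ≥ x₀, ∀ t : ℝ, |∑ p ∈ primesUpTo x, Real.cos (t * Real.log p) / p -
      Real.log ‖riemannZeta ⟨1 + 1 / Real.log x, t⟩‖| ≤ C := by
  obtain ⟨C, hC, hreal⟩ := exists_neg_re_logDeriv_riemannZeta_ofReal_le (1 + 1 / Real.log x₀)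
  refine ⟨Real.exp 1 * (1 + C / Real.log x₀) + ∑' p : Nat.Primes, (p : ℝ) ^ (-2 : ℝ),
    fun x hx t => ?_⟩
  have hx1 : 1 < x := hx₀.trans_le hx
  have hlog₀ := Real.log_pos hx₀
  have hlog : Real.log x₀ ≤ Real.log x := Real.log_le_log (by linarith) hx
  have hlogx := hlog₀.trans_le hlog
  have hσ : 1 < 1 + 1 / Real.log x := lt_add_of_pos_right _ (one_div_pos.2 hlogx)
  have hcost : Real.exp 1 / Real.log x * -(logDeriv riemannZeta (1 + 1 / Real.log x : ℝ)).re ≤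
      Real.exp 1 * (1 + C / Real.log x₀) :=
    calc _ ≤ Real.exp 1 / Real.log x * (1 / (1 + 1 / Real.log x - 1) + C) := by
          gcongr
          exact hreal _ hσ (by gcongr)
      _ = Real.exp 1 * (1 + C / Real.log x) := by
        rw [add_sub_cancel_left, one_div_one_div]
        field_simp
      _ ≤ _ := by gcongr
  have htrunc := (abs_sum_primesUpTo_sub_tsum_le hx1
    fun n => Real.abs_cos_le_one (t * Real.log n)).trans hcost
  have heuler := abs_log_norm_riemannZeta_sub_tsum_primes_le (s := ⟨_, t⟩) hσ
  rw [abs_sub_comm] at heuler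
  exact (abs_sub_le _ _ _).trans (add_le_add htrunc heuler)

lemma exists_abs_log_norm_riemannZeta_ofReal_sub_log_le (M : ℝ) : ∃ C, ∀ σ : ℝ, 1 < σ → σ ≤ M →
    |Real.log ‖riemannZeta σ‖ - Real.log (1 / (σ - 1))| ≤ C := by
  obtain ⟨C, hC⟩ := exists_abs_log_norm_riemannZeta₁_le
    (K := Complex.ofReal '' Set.Icc 1 M) (isCompact_Icc.image Complex.continuous_ofReal)
    (by rintro _ ⟨σ, hσ, rfl⟩; exact hσ.1)
  refine ⟨C, fun σ hσ hσM => ?_⟩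
  have hnorm : ‖(σ : ℂ) - 1‖ = σ - 1 := by
    rw [← Complex.ofReal_one, ← Complex.ofReal_sub, Complex.norm_of_nonneg (by linarith)]
  rw [log_norm_riemannZeta_eq hσ.le (by exact_mod_cast hσ.ne'), hnorm, one_div, Real.log_inv,
    sub_neg_eq_add, sub_add_cancel]
  exact hC σ ⟨σ, ⟨hσ.le, hσM⟩, rfl⟩

theorem exists_abs_sum_primesUpTo_one_sub_cos_sub_le (hx₀ : 1 < x₀) :
    ∃ C, ∀ x ≥ x₀, ∀ t : ℝ, |∑ p ∈ primesUpTo x, (1 - Real.cos (t * Real.log p)) / p -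
      (Real.log (Real.log x) - Real.log ‖riemannZeta ⟨1 + 1 / Real.log x, t⟩‖)| ≤ C := by
  obtain ⟨A, hA⟩ := exists_abs_sum_primesUpTo_sub_log_norm_riemannZeta_le hx₀
  obtain ⟨B, hB⟩ :=
    exists_abs_log_norm_riemannZeta_ofReal_sub_log_le (1 + 1 / Real.log x₀)
  refine ⟨2 * A + B, fun x hx t => ?_⟩
  have hlog₀ := Real.log_pos hx₀
  have hlog : Real.log x₀ ≤ Real.log x := Real.log_le_log (by linarith) hx
  have hpole := abs_le.1 (hB (1 + 1 / Real.log x)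
    (lt_add_of_pos_right _ (one_div_pos.2 (hlog₀.trans_le hlog))) (by gcongr))
  rw [add_sub_cancel_left, one_div_one_div] at hpole
  have hzero := abs_le.1 (hA x hx 0)
  have ht := abs_le.1 (hA x hx t)
  have hofReal : (⟨1 + 1 / Real.log x, 0⟩ : ℂ) = (1 + 1 / Real.log x : ℝ) := rfl
  simp only [zero_mul, Real.cos_zero, hofReal] at hzero
  simp only [sub_div, sum_sub_distrib, abs_le]
  constructor <;> linarith

end TruncatedSums

/-! ### Size and variation of `log ‖ζ‖` -/

section LogNorm

variable {σ : ℝ}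

lemma exists_neg_le_log_norm_riemannZeta (M T : ℝ) : ∃ C, ∀ σ t : ℝ, 1 < σ → σ ≤ M → |t| ≤ T →
    -C ≤ Real.log ‖riemannZeta ⟨σ, t⟩‖ := by
  obtain ⟨C, hC⟩ := exists_abs_log_norm_riemannZeta₁_le
    (K := Set.Icc 1 M ×ℂ Set.Icc (-T) T) (isCompact_Icc.reProdIm isCompact_Icc) fun s hs => hs.1.1
  refine ⟨C + M + T, fun σ t hσ hσM ht => ?_⟩
  have h1 : (⟨σ, t⟩ : ℂ) ≠ 1 := fun h => hσ.ne' (congrArg Complex.re h)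
  have hnorm : ‖(⟨σ, t⟩ : ℂ) - 1‖ ≤ M + T := by
    refine (Complex.norm_le_abs_re_add_abs_im _).trans ?_
    rw [Complex.sub_re, Complex.sub_im, Complex.one_re, Complex.one_im, sub_zero,
      abs_of_pos (sub_pos.2 hσ)]
    linarith
  rw [log_norm_riemannZeta_eq hσ.le h1]
  linarith [(abs_le.1 (hC ⟨σ, t⟩ ⟨⟨hσ.le, hσM⟩, abs_le.1 ht⟩)).1,
    Real.log_le_sub_one_of_pos (norm_pos_iff.2 (sub_ne_zero.2 h1))]

lemma hasDerivAt_log_norm_re {f : ℂ → ℂ} {t : ℝ} (hf : DifferentiableAt ℂ f ⟨σ, t⟩)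
    (h0 : f ⟨σ, t⟩ ≠ 0) :
    HasDerivAt (fun v : ℝ => Real.log ‖f ⟨v, t⟩‖) (logDeriv f ⟨σ, t⟩).re σ := by
  have hline : HasDerivAt (fun v : ℝ => (⟨v, t⟩ : ℂ)) 1 σ := by
    have h : HasDerivAt (fun v : ℝ => (v : ℂ) + ⟨0, t⟩) 1 σ :=
      Complex.ofRealCLM.hasDerivAt.add_const _
    exact h.congr_of_eventuallyEq (.of_forall fun v => by apply Complex.ext <;> simp)
  have hcomp := hf.hasDerivAt.comp σ hline
  rw [mul_one] at hcomp
  have hsq : (fun v : ℝ => Real.log ‖f ⟨v, t⟩‖) = fun v : ℝ => Real.log (‖f ⟨v, t⟩‖ ^ 2) / 2 := by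
    ext v
    rw [Real.log_pow, Nat.cast_ofNat, mul_div_cancel_left₀ _ two_ne_zero]
  rw [hsq]
  refine ((hcomp.norm_sq.log (by simpa using h0)).div_const 2).congr_deriv ?_
  rw [Function.comp_apply, Complex.inner, logDeriv_apply, Complex.div_re,
    ← Complex.normSq_eq_norm_sq, Complex.mul_re, Complex.conj_re, Complex.conj_im]
  ring

lemma hasDerivAt_log_norm_riemannZeta (hσ : 1 < σ) (t : ℝ) :
    HasDerivAt (fun v : ℝ => Real.log ‖riemannZeta ⟨v, t⟩‖) (logDeriv riemannZeta ⟨σ, t⟩).re σ :=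
  hasDerivAt_log_norm_re (differentiableAt_riemannZeta fun h => hσ.ne' (congrArg Complex.re h))
    (riemannZeta_ne_zero_of_one_le_re hσ.le)

lemma exists_log_norm_riemannZeta_sub_le (M : ℝ) : ∃ C, 0 < C ∧ ∀ t : ℝ, 1 / 2 ≤ |t| →
    ∀ σ₁ σ₂ : ℝ, 1 < σ₁ → σ₁ ≤ σ₂ → σ₂ ≤ M →
      Real.log ‖riemannZeta ⟨σ₂, t⟩‖ - Real.log ‖riemannZeta ⟨σ₁, t⟩‖ ≤
        C * Real.log (|t| + 4) * (σ₂ - σ₁) := by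
  obtain ⟨C, hC, hlogDeriv⟩ := exists_re_logDeriv_riemannZeta_le_log M
  refine ⟨C, hC, fun t ht σ₁ σ₂ hσ₁ hσ hσ₂ => ?_⟩
  have hderiv : ∀ v ∈ Set.Icc σ₁ σ₂, HasDerivAt (fun v : ℝ => Real.log ‖riemannZeta ⟨v, t⟩‖)
      (logDeriv riemannZeta ⟨v, t⟩).re v := fun v hv =>
    hasDerivAt_log_norm_riemannZeta (hσ₁.trans_le hv.1) t
  refine (convex_Icc σ₁ σ₂).image_sub_le_mul_sub_of_deriv_le
    (fun v hv => (hderiv v hv).continuousAt.continuousWithinAt)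
    (fun v hv => (hderiv v (interior_subset hv)).differentiableAt.differentiableWithinAt)
    (fun v hv => ?_) σ₁ (Set.left_mem_Icc.2 hσ) σ₂ (Set.right_mem_Icc.2 hσ) hσ
  have hv' := interior_subset hv
  rw [(hderiv v hv').deriv]
  exact hlogDeriv t ht v (hσ₁.trans_le hv'.1) (hv'.2.trans hσ₂)

end LogNorm

/-! ### Sums of `(1 - cos (t log p)) / p` -/

section CosineSums

variable {x x₀ y : ℝ}

theorem exists_sum_primesUpTo_one_sub_cos_le (hx₀ : 1 < x₀) (T : ℝ) :
    ∃ C, ∀ x ≥ x₀, ∀ t : ℝ, |t| ≤ T →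
      ∑ p ∈ primesUpTo x, (1 - Real.cos (t * Real.log p)) / p ≤ Real.log (Real.log x) + C := by
  obtain ⟨A, hA⟩ := exists_abs_sum_primesUpTo_one_sub_cos_sub_le hx₀
  obtain ⟨B, hB⟩ := exists_neg_le_log_norm_riemannZeta (1 + 1 / Real.log x₀) T
  refine ⟨A + B, fun x hx t ht => ?_⟩
  have hlog₀ := Real.log_pos hx₀
  have hlog : Real.log x₀ ≤ Real.log x := Real.log_le_log (by linarith) hx
  have hσ : 1 < 1 + 1 / Real.log x :=
    lt_add_of_pos_right _ (one_div_pos.2 (hlog₀.trans_le hlog))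
  linarith [(abs_le.1 (hA x hx t)).2, hB _ t hσ (by gcongr) ht]

lemma sum_primesIn_eq_sub {M : Type*} [AddCommGroup M] (f : ℕ → M) (hy : 0 ≤ y) (hyx : y ≤ x) :
    ∑ p ∈ primesIn y x, f p = ∑ p ∈ primesUpTo x, f p - ∑ p ∈ primesUpTo y, f p := by
  have hsub : primesUpTo y ⊆ primesUpTo x :=
    filter_subset_filter _ (Iic_subset_Iic.2 (Nat.floor_le_floor hyx))
  have hsdiff : primesIn y x = primesUpTo x \ primesUpTo y := by
    ext n
    rw [mem_sdiff, mem_primesUpTo (hy.trans hyx), mem_primesUpTo hy, primesIn, mem_filter, mem_Iic,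
      Nat.le_floor_iff (hy.trans hyx), ← not_le]
    tauto
  rw [hsdiff, sum_sdiff_eq_sub hsub]

lemma primesIn_eq_empty (hx : 0 ≤ x) (hxy : x ≤ y) : primesIn y x = ∅ := by
  refine filter_eq_empty_iff.2 fun n hn h => ?_
  exact (h.2.trans_le ((Nat.le_floor_iff hx).1 (mem_Iic.1 hn))).not_ge hxy

theorem exists_sum_primesIn_one_sub_cos_le (hx₀ : 1 < x₀) :
    ∃ C, ∀ y ≥ x₀, ∀ x ≥ y, ∀ t : ℝ, 1 / 2 ≤ |t| →
      ∑ p ∈ primesIn y x, (1 - Real.cos (t * Real.log p)) / p ≤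
        Real.log (Real.log x) - Real.log (Real.log y) +
          C * (1 + Real.log (|t| + 4) / Real.log y) := by
  obtain ⟨A, hA⟩ := exists_abs_sum_primesUpTo_one_sub_cos_sub_le hx₀
  obtain ⟨B, hB, hmvt⟩ := exists_log_norm_riemannZeta_sub_le (1 + 1 / Real.log x₀)
  refine ⟨2 * |A| + B, fun y hy x hx t ht => ?_⟩
  have hlog₀ := Real.log_pos hx₀
  have hlogy : Real.log x₀ ≤ Real.log y := Real.log_le_log (by linarith) hy
  have hlogx : Real.log y ≤ Real.log x := Real.log_le_log (by linarith) hx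
  have hy0 := hlog₀.trans_le hlogy
  have hx0 := one_div_pos.2 (hy0.trans_le hlogx)
  have hL := one_le_log_abs_add_four t
  have hvar := hmvt t ht (1 + 1 / Real.log x) (1 + 1 / Real.log y) (lt_add_of_pos_right _ hx0)
    (by gcongr) (by gcongr)
  have hmul : B * Real.log (|t| + 4) * (1 + 1 / Real.log y - (1 + 1 / Real.log x)) ≤
      B * (Real.log (|t| + 4) / Real.log y) := by
    rw [mul_assoc, ← mul_one_div (Real.log (|t| + 4))]
    gcongr
    linarith
  have hA0 : 0 ≤ |A| * (Real.log (|t| + 4) / Real.log y) := by positivity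
  rw [sum_primesIn_eq_sub _ (by linarith) hx]
  linarith [(abs_le.1 (hA x (hy.le.trans hx) t)).2, (abs_le.1 (hA y hy t)).1, le_abs_self A]

lemma log_abs_add_four_le {k : ℤ} (hk : k ≠ 0) {t : ℝ} (ht : |t - k| ≤ 1 / 2) :
    Real.log (|t| + 4) ≤ 3 * Real.log (2 * |(k : ℝ)|) := by
  have hk1 : (1 : ℝ) ≤ |(k : ℝ)| := by exact_mod_cast Int.one_le_abs hk
  have htk : |t| ≤ |(k : ℝ)| + 1 / 2 := by linarith [abs_sub_abs_le_abs_sub t k]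
  calc Real.log (|t| + 4) ≤ Real.log ((2 * |(k : ℝ)|) ^ 3) := by
        refine Real.log_le_log (by positivity) ?_
        nlinarith [le_self_pow₀ hk1 three_ne_zero]
    _ = 3 * Real.log (2 * |(k : ℝ)|) := by rw [Real.log_pow, Nat.cast_ofNat]

theorem exists_sum_primesIn_exp_one_sub_cos_le : ∃ C, ∀ x : ℝ, 2 ≤ x → ∀ k : ℤ, k ≠ 0 →
    ∀ t : ℝ, |t - k| ≤ 1 / 2 →
      ∑ p ∈ primesIn (Real.exp (Real.log (2 * |(k : ℝ)|) ^ 2)) x,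
        (1 - Real.cos (t * Real.log p)) / p ≤ Real.log (Real.log x) + C := by
  have hlog2 := Real.log_pos one_lt_two
  obtain ⟨C, hC⟩ := exists_sum_primesIn_one_sub_cos_le
    (x₀ := Real.exp (Real.log 2 ^ 2)) (Real.one_lt_exp_iff.2 (by positivity))
  refine ⟨|C| * (1 + 3 / Real.log 2) - Real.log (Real.log 2 ^ 2), fun x hx k hk t ht => ?_⟩
  have hk1 : (1 : ℝ) ≤ |(k : ℝ)| := by exact_mod_cast Int.one_le_abs hk
  set L := Real.log (2 * |(k : ℝ)|)
  have hL2 : Real.log 2 ≤ L := Real.log_le_log two_pos (by linarith)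
  rcases le_total x (Real.exp (L ^ 2)) with hxy | hyx
  · have hloglog : Real.log (Real.log 2 ^ 2) ≤ Real.log (Real.log x) := by
      have hlogx : Real.log 2 ≤ Real.log x := Real.log_le_log two_pos hx
      refine Real.log_le_log (by positivity) ?_
      nlinarith [Real.log_two_lt_d9]
    have hC0 : 0 ≤ |C| * (1 + 3 / Real.log 2) := by positivity
    rw [primesIn_eq_empty (by linarith) hxy, sum_empty]
    linarith
  · have ht2 : 1 / 2 ≤ |t| := by linarith [abs_sub_abs_le_abs_sub (k : ℝ) t, abs_sub_comm t k]
    have h := hC (Real.exp (L ^ 2)) (by gcongr) x hyx t ht2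
    have hL0 : 0 < L := hlog2.trans_le hL2
    have hratio : Real.log (|t| + 4) / L ^ 2 ≤ 3 / Real.log 2 :=
      calc _ ≤ 3 * L / L ^ 2 := by gcongr; exact log_abs_add_four_le hk ht
        _ = 3 / L := by field_simp
        _ ≤ 3 / Real.log 2 := by gcongr
    have hpos : 0 ≤ Real.log (|t| + 4) / L ^ 2 := by
      have := one_le_log_abs_add_four t
      positivity
    have hCle : C * (1 + Real.log (|t| + 4) / L ^ 2) ≤ |C| * (1 + 3 / Real.log 2) := by
      gcongr
      exact le_abs_self C
    have hloglog : Real.log (Real.log 2 ^ 2) ≤ Real.log (L ^ 2) := by gcongr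
    rw [Real.log_exp] at h
    linarith

end CosineSums

theorem stmt17 :
    ∃ C : ℝ, 0 < C ∧
      ∀ x : ℝ, 2 ≤ x →
        (sSup ((fun t : ℝ => ∑ p ∈ primesUpTo x, (1 - Real.cos (t * Real.log p)) / p) ''
              Set.Icc (-(1/2)) (1/2)) ≤
            Real.log (Real.log x) + C) ∧
        ∀ k : ℤ, k ≠ 0 →
          sSup ((fun t : ℝ =>
              ∑ p ∈ primesIn (Real.exp ((Real.log (2 * |(k : ℝ)|)) ^ 2)) x,
                (1 - Real.cos (t * Real.log p)) / p) ''
            Set.Icc ((k : ℝ) - 1/2) ((k : ℝ) + 1/2)) ≤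
          Real.log (Real.log x) + C := by
  obtain ⟨C₁, hC₁⟩ := exists_sum_primesUpTo_one_sub_cos_le one_lt_two (1 / 2)
  obtain ⟨C₂, hC₂⟩ := exists_sum_primesIn_exp_one_sub_cos_le
  refine ⟨|C₁| + |C₂| + 1, by positivity, fun x hx => ⟨?_, fun k hk => ?_⟩⟩
  · refine csSup_le ((Set.nonempty_Icc.2 (by norm_num)).image _) ?_
    rintro _ ⟨t, ht, rfl⟩
    linarith [hC₁ x hx t (abs_le.2 ht), le_abs_self C₁, abs_nonneg C₂]
  · refine csSup_le ((Set.nonempty_Icc.2 (by linarith)).image _) ?_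
    rintro _ ⟨t, ht, rfl⟩
    have htk : |t - k| ≤ 1 / 2 := abs_le.2 ⟨by linarith [ht.1], by linarith [ht.2]⟩
    linarith [hC₂ x hx k hk t htk, le_abs_self C₂, abs_nonneg C₁]
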